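/- arXiv:2512.21546 — 3 statements merged into one kernel-verified Lean document; each statement's English description precedes it below -/
import Mathlib

section
/- Let σ = (Z, 𝒫) be a stability condition on 𝒟 and let M → X → N → M[1] be a distinguished triangle in which M, X, N are all nonzero and σ-semistable, say M ∈ 𝒫(φ₁), X ∈ 𝒫(φ₂), N ∈ 𝒫(φ₃). Then φ₁ ≤ φ₂ ≤ φ₃. -/
/-!
Since there are no nonzero maps from larger to smaller phase, a failure of either inequality
forces `f = 0` or `g = 0`, so the triangle splits. If `f = 0`, then `g` is a split mono and `h` a
split epi, and the nonzero maps `M[1] ⟶ N` and `N ⟶ X` give `φ₁ + 1 ≤ φ₃ ≤ φ₂`. If `g = 0`, then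
`f` is a split epi and `h` a split mono, and the nonzero maps `X ⟶ M` and `M[1] ⟶ N` give
`φ₂ + 1 ≤ φ₁ + 1 ≤ φ₃`. Both contradict the assumed failure.
-/

open CategoryTheory CategoryTheory.Limits CategoryTheory.Pretriangulated

/-- A stability condition `σ = (Z, 𝒫)` on a pretriangulated category `D`:
a central charge `Z` (constant on isomorphism classes and additive on distinguished
triangles) together with, for each `φ ∈ ℝ`, a class `𝒫(φ)` of objects (closed under
isomorphism, containing zero objects, closed under finite direct sums and under
extensions), satisfying Bridgeland's axioms (1)–(4). -/
structure StabilityConditionOn (D : Type*) [Category D] [HasZeroObject D] [Preadditive D]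
    [HasShift D ℤ] [∀ n : ℤ, (shiftFunctor D n).Additive] [Pretriangulated D]
    [HasBinaryBiproducts D] where
  /-- the central charge -/
  Z : D → ℂ
  /-- the slicing: for each `φ ∈ ℝ`, a class of objects -/
  P : ℝ → D → Prop
  Z_iso : ∀ {X Y : D}, (X ≅ Y) → Z X = Z Y
  Z_add : ∀ T : Triangle D, T ∈ (distTriang D) → Z T.obj₂ = Z T.obj₁ + Z T.obj₃
  P_iso : ∀ {φ : ℝ} {X Y : D}, (X ≅ Y) → P φ X → P φ Y
  P_zero : ∀ {φ : ℝ} {X : D}, IsZero X → P φ X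
  P_sum : ∀ {φ : ℝ} (X Y : D), P φ X → P φ Y → P φ (X ⊞ Y)
  P_ext : ∀ {φ : ℝ} (T : Triangle D), T ∈ (distTriang D) →
    P φ T.obj₁ → P φ T.obj₃ → P φ T.obj₂
  charge : ∀ {φ : ℝ} {M : D}, P φ M → ¬ IsZero M →
    ∃ m : ℝ, 0 < m ∧ Z M = (m : ℂ) * Complex.exp ((Real.pi * φ : ℝ) * Complex.I)
  shift : ∀ (φ : ℝ) (M : D), P φ M ↔ P (φ + 1) (M⟦(1 : ℤ)⟧)
  hom_zero : ∀ {φ₁ φ₂ : ℝ} {A B : D}, P φ₁ A → P φ₂ B → φ₂ < φ₁ →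
    ∀ f : A ⟶ B, f = 0
  HN : ∀ M : D, ¬ IsZero M →
    ∃ (n : ℕ) (_ : 0 < n) (Mf : Fin (n + 1) → D) (A : Fin n → D) (φs : Fin n → ℝ),
      IsZero (Mf 0) ∧ Mf (Fin.last n) = M ∧
      (∀ i j : Fin n, i < j → φs j < φs i) ∧
      (∀ i : Fin n, ¬ IsZero (A i) ∧ P (φs i) (A i) ∧
        ∃ (f : Mf i.castSucc ⟶ Mf i.succ) (g : Mf i.succ ⟶ A i)
          (h : A i ⟶ (Mf i.castSucc)⟦(1 : ℤ)⟧),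
          Triangle.mk f g h ∈ (distTriang D))

/-- The contrapositive of the Hom-vanishing axiom. -/
theorem StabilityConditionOn.phase_le_of_ne_zero {D : Type*} [Category D] [HasZeroObject D]
    [Preadditive D] [HasShift D ℤ] [∀ n : ℤ, (shiftFunctor D n).Additive]
    [Pretriangulated D] [HasBinaryBiproducts D]
    (σ : StabilityConditionOn D) {φ ψ : ℝ} {A B : D} (hA : σ.P φ A) (hB : σ.P ψ B)
    (u : A ⟶ B) (hu : u ≠ 0) : φ ≤ ψ :=
  not_lt.mp fun hlt => hu (σ.hom_zero hA hB hlt u)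

/-- in a distinguished triangle `M → X → N → M[1]` whose three terms are
nonzero and `σ`-semistable of phases `φ₁, φ₂, φ₃` respectively, one has `φ₁ ≤ φ₂ ≤ φ₃`. -/
theorem phase_increasing_in_triangle {D : Type*} [Category D] [HasZeroObject D]
    [Preadditive D] [HasShift D ℤ] [∀ n : ℤ, (shiftFunctor D n).Additive]
    [Pretriangulated D] [HasBinaryBiproducts D]
    (σ : StabilityConditionOn D) (φ₁ φ₂ φ₃ : ℝ) (M X N : D)
    (f : M ⟶ X) (g : X ⟶ N) (h : N ⟶ M⟦(1 : ℤ)⟧)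
    (hT : Triangle.mk f g h ∈ (distTriang D))
    (hM : ¬ IsZero M) (hX : ¬ IsZero X) (hN : ¬ IsZero N)
    (hMP : σ.P φ₁ M) (hXP : σ.P φ₂ X) (hNP : σ.P φ₃ N) :
    φ₁ ≤ φ₂ ∧ φ₂ ≤ φ₃ := by
  -- The maps `r`, `s` below are nonzero: an identity of a nonzero object factors through each.
  have hM1 : ¬ IsZero (M⟦(1 : ℤ)⟧) := fun hz =>
    hM ((IsZero.iff_id_eq_zero M).mpr
      ((shiftFunctor D (1 : ℤ)).map_injective (hz.eq_of_src _ _)))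
  have hM1P := (σ.shift φ₁ M).mp hMP
  constructor
  · by_contra! hlt
    have hf : f = 0 := σ.hom_zero hMP hXP hlt f
    obtain ⟨r, hr⟩ := Triangle.yoneda_exact₂ _ hT (𝟙 X) (by subst hf; exact zero_comp)
    obtain ⟨s, hs⟩ := Triangle.coyoneda_exact₁ _ hT (𝟙 (M⟦(1 : ℤ)⟧))
      (by subst hf; exact (Category.id_comp _).trans (Functor.map_zero _ _ _))
    have h₁ := σ.phase_le_of_ne_zero hNP hXP r fun h0 =>
      hX ((IsZero.iff_id_eq_zero X).mpr (by rw [hr, h0]; exact comp_zero))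
    have h₂ := σ.phase_le_of_ne_zero hM1P hNP s fun h0 =>
      hM1 ((IsZero.iff_id_eq_zero _).mpr (by rw [hs, h0]; exact zero_comp))
    linarith
  · by_contra! hlt
    have hg : g = 0 := σ.hom_zero hXP hNP hlt g
    obtain ⟨s, hs⟩ := Triangle.coyoneda_exact₂ _ hT (𝟙 X) (by subst hg; exact comp_zero)
    obtain ⟨r, hr⟩ := Triangle.yoneda_exact₃ _ hT (𝟙 N) (by subst hg; exact zero_comp)
    have h₁ := σ.phase_le_of_ne_zero hXP hMP s fun h0 =>
      hX ((IsZero.iff_id_eq_zero X).mpr (by rw [hs, h0]; exact zero_comp))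
    have h₂ := σ.phase_le_of_ne_zero hM1P hNP r fun h0 =>
      hN ((IsZero.iff_id_eq_zero N).mpr (by rw [hr, h0]; exact comp_zero))
    linarith
end

section
/- Harder–Narasimhan filtrations in 𝒟 are unique up to isomorphism: let σ = (Z, 𝒫) be a stability condition on 𝒟 and let M be a nonzero object. Suppose M admits two HN filtrations, given respectively by distinguished triangles Mᵢ₋₁ → Mᵢ → Aᵢ → Mᵢ₋₁[1] (1 ≤ i ≤ n, M₀ = 0, Mₙ = M, Aᵢ ∈ 𝒫(φᵢ) nonzero, φ₁ > ⋯ > φₙ) and M'ⱼ₋₁ → M'ⱼ → Bⱼ → M'ⱼ₋₁[1] (1 ≤ j ≤ m, M'₀ = 0, M'ₘ = M, Bⱼ ∈ 𝒫(ψⱼ) nonzero, ψ₁ > ⋯ > ψₘ). Then n = m, φᵢ = ψᵢ for all i, and Aᵢ ≅ Bᵢ for all i. -/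
/-!
Harder–Narasimhan filtrations are compared from the top, one triangle at a time.

By dévissage along the triangles, an object filtered by semistables of phase `> ψ` has no
nonzero morphism to a semistable object of phase `ψ`, and neither does its shift by `1`
(`IsHNFiltration.hom_eq_zero`, `IsHNFiltration.hom_shift_eq_zero`). In the last triangle
`N → M → B`, the map `M → B` is nonzero, since otherwise the identity of `B` would factor through
`N[1]`, from which `B` receives only zero morphisms. So two HN filtrations of `M` have the same
last phase (`IsHNFiltration.last_phase_le`, used both ways). Given this, the vanishing statements
make the projection of `M` to either last factor extend uniquely along the other one, so the
last factors are isomorphic under `M`, and the triangles, hence also the penultimate objects,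
are isomorphic (`iso_of_triangles`). Induction on the length finishes the proof
(`IsHNFiltration.unique`); filtrations of length `0` are handled by the same nonvanishing.
-/

open CategoryTheory CategoryTheory.Limits CategoryTheory.Pretriangulated

/-! ### Vanishing of morphisms out of a filtered object -/

section

variable {D : Type*} [Category D] [HasZeroObject D] [Preadditive D] [HasShift D ℤ]
  [∀ n : ℤ, (shiftFunctor D n).Additive] [Pretriangulated D] [HasBinaryBiproducts D]

/-- The data `(Mf, A, φs)` is a Harder–Narasimhan filtration of its top object
`Mf (Fin.last n)`. The length `n = 0` is allowed, in which case the top object is zero. -/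
def IsHNFiltration (σ : StabilityConditionOn D) (n : ℕ) (Mf : Fin (n + 1) → D)
    (A : Fin n → D) (φs : Fin n → ℝ) : Prop :=
  IsZero (Mf 0) ∧ (∀ i j : Fin n, i < j → φs j < φs i) ∧
    ∀ i : Fin n, ¬ IsZero (A i) ∧ σ.P (φs i) (A i) ∧
      ∃ (f : Mf i.castSucc ⟶ Mf i.succ) (g : Mf i.succ ⟶ A i)
        (h : A i ⟶ (Mf i.castSucc)⟦(1 : ℤ)⟧),
        Triangle.mk f g h ∈ (distTriang D)

namespace IsHNFiltration

variable {σ : StabilityConditionOn D}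

/-- Dropping the last step of an HN filtration. -/
lemma truncate {n : ℕ} {Mf : Fin (n + 2) → D} {A : Fin (n + 1) → D} {φs : Fin (n + 1) → ℝ}
    (H : IsHNFiltration σ (n + 1) Mf A φs) :
    IsHNFiltration σ n (fun i => Mf i.castSucc) (fun i => A i.castSucc)
      (fun i => φs i.castSucc) :=
  ⟨H.1, fun _ _ hij => H.2.1 _ _ (Fin.castSucc_lt_castSucc_iff.2 hij),
    fun i => H.2.2 i.castSucc⟩

/-- By dévissage along the triangles, an object filtered by semistables of phase `> ψ` has no
nonzero morphism to a semistable object of phase `ψ`. -/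
lemma hom_eq_zero {n : ℕ} {Mf : Fin (n + 1) → D} {A : Fin n → D} {φs : Fin n → ℝ}
    (H : IsHNFiltration σ n Mf A φs) {ψ : ℝ} (hψ : ∀ i, ψ < φs i) {B : D} (hB : σ.P ψ B)
    (f : Mf (Fin.last n) ⟶ B) : f = 0 := by
  suffices h : ∀ (k : Fin (n + 1)) (f : Mf k ⟶ B), f = 0 from h _ f
  intro k
  induction k using Fin.induction with
  | zero => exact fun f => H.1.eq_of_src _ _
  | succ i ih =>
    intro f
    obtain ⟨-, hP, u, v, w, hT⟩ := H.2.2 i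
    obtain ⟨g, hg⟩ : ∃ g : A i ⟶ B, f = v ≫ g := Triangle.yoneda_exact₂ _ hT f (ih _)
    have hg0 : g = 0 := σ.hom_zero hP hB (hψ i) g
    rw [hg, hg0, comp_zero]

/-- The vanishing also holds after shifting the source: a morphism from `X⟦1⟧` to `B` is the
shift of a morphism from `X` to `B⟦-1⟧`, which is semistable of phase `ψ - 1`. -/
lemma hom_shift_eq_zero {n : ℕ} {Mf : Fin (n + 1) → D} {A : Fin n → D} {φs : Fin n → ℝ}
    (H : IsHNFiltration σ n Mf A φs) {ψ : ℝ} (hψ : ∀ i, ψ < φs i) {B : D} (hB : σ.P ψ B)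
    (f : (Mf (Fin.last n))⟦(1 : ℤ)⟧ ⟶ B) : f = 0 := by
  let e : (B⟦(-1 : ℤ)⟧)⟦(1 : ℤ)⟧ ≅ B := (shiftEquiv D (1 : ℤ)).counitIso.app B
  have hB' : σ.P (ψ - 1) (B⟦(-1 : ℤ)⟧) := by
    rw [σ.shift, sub_add_cancel]
    exact σ.P_iso e.symm hB
  obtain ⟨g, hg⟩ := (shiftFunctor D (1 : ℤ)).map_surjective (f ≫ e.inv)
  have hg0 : g = 0 := H.hom_eq_zero (fun i => by linarith [hψ i]) hB' g
  rw [hg0, Functor.map_zero] at hg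
  rw [← cancel_mono e.inv, ← hg, zero_comp]

end IsHNFiltration

/-! ### Comparison of the last triangles -/

/-- If the second map of a distinguished triangle `N ⟶ M ⟶ B` vanishes, the identity of `B`
factors through `N⟦1⟧`; so `B = 0` as soon as `Hom(N⟦1⟧, B) = 0`. -/
lemma isZero_of_triangle {N M B : D} {f : N ⟶ M} {g : M ⟶ B} {h : B ⟶ N⟦(1 : ℤ)⟧}
    (hT : Triangle.mk f g h ∈ (distTriang D)) (hg : g = 0)
    (hN : ∀ u : N⟦(1 : ℤ)⟧ ⟶ B, u = 0) : IsZero B := by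
  obtain ⟨u, hu⟩ : ∃ u : N⟦(1 : ℤ)⟧ ⟶ B, 𝟙 B = h ≫ u :=
    Triangle.yoneda_exact₃ _ hT (𝟙 B) (by
      change g ≫ 𝟙 B = 0
      rw [hg, zero_comp])
  have hu0 : u = 0 := hN u
  rw [IsZero.iff_id_eq_zero, hu, hu0, comp_zero]

/-- A map `M ⟶ X` factors uniquely through the cone of `N ⟶ M` when both `N` and `N⟦1⟧` have
no nonzero morphism to `X`. -/
lemma existsUnique_factor {N M A X : D} {f : N ⟶ M} {g : M ⟶ A} {h : A ⟶ N⟦(1 : ℤ)⟧}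
    (hT : Triangle.mk f g h ∈ (distTriang D)) (h₀ : ∀ u : N ⟶ X, u = 0)
    (h₁ : ∀ u : N⟦(1 : ℤ)⟧ ⟶ X, u = 0) (p : M ⟶ X) : ∃! q : A ⟶ X, g ≫ q = p := by
  obtain ⟨q, hq⟩ : ∃ q : A ⟶ X, p = g ≫ q := Triangle.yoneda_exact₂ _ hT p (h₀ _)
  refine ⟨q, hq.symm, fun q' hq' => ?_⟩
  obtain ⟨u, hu⟩ : ∃ u : N⟦(1 : ℤ)⟧ ⟶ X, q' - q = h ≫ u :=
    Triangle.yoneda_exact₃ _ hT (q' - q) (by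
      change g ≫ (q' - q) = 0
      rw [Preadditive.comp_sub, hq', ← hq, sub_self])
  have hu0 : u = 0 := h₁ u
  rw [← sub_eq_zero, hu, hu0, comp_zero]

/-- Two distinguished triangles on isomorphic middle objects are isomorphic at both ends,
provided no nonzero morphism goes from either first object, or its shift, to either third
object. The first objects
are compared through the rotated triangles, whose third objects are their shifts. -/
lemma iso_of_triangles {N M A N' M' A' : D} {f : N ⟶ M} {g : M ⟶ A} {h : A ⟶ N⟦(1 : ℤ)⟧}
    (hT : Triangle.mk f g h ∈ (distTriang D)) {f' : N' ⟶ M'} {g' : M' ⟶ A'}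
    {h' : A' ⟶ N'⟦(1 : ℤ)⟧} (hT' : Triangle.mk f' g' h' ∈ (distTriang D)) (e : M ≅ M')
    (a₀ : ∀ u : N ⟶ A, u = 0) (a₁ : ∀ u : N⟦(1 : ℤ)⟧ ⟶ A, u = 0)
    (b₀ : ∀ u : N ⟶ A', u = 0) (b₁ : ∀ u : N⟦(1 : ℤ)⟧ ⟶ A', u = 0)
    (a₀' : ∀ u : N' ⟶ A, u = 0) (a₁' : ∀ u : N'⟦(1 : ℤ)⟧ ⟶ A, u = 0)
    (b₀' : ∀ u : N' ⟶ A', u = 0) (b₁' : ∀ u : N'⟦(1 : ℤ)⟧ ⟶ A', u = 0) :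
    Nonempty (N ≅ N') ∧ Nonempty (A ≅ A') := by
  obtain ⟨q, hq, -⟩ := existsUnique_factor hT b₀ b₁ (e.hom ≫ g')
  obtain ⟨r, hr, -⟩ := existsUnique_factor hT' a₀' a₁' (e.inv ≫ g)
  let ε : A ≅ A' :=
    { hom := q
      inv := r
      hom_inv_id := (existsUnique_factor hT a₀ a₁ g).unique
        (by rw [← Category.assoc, hq, Category.assoc, hr, e.hom_inv_id_assoc]) (Category.comp_id g)
      inv_hom_id := (existsUnique_factor hT' b₀' b₁' g').unique
        (by rw [← Category.assoc, hr, Category.assoc, hq, e.inv_hom_id_assoc]) (Category.comp_id g') }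
  let τ := isoTriangleOfIso₁₂ _ _ (rot_of_distTriang _ hT) (rot_of_distTriang _ hT') e ε hq
  exact ⟨⟨(shiftFunctor D (1 : ℤ)).preimageIso (Triangle.π₃.mapIso τ)⟩, ⟨ε⟩⟩

/-! ### Induction on the length -/

namespace IsHNFiltration

variable {σ : StabilityConditionOn D}

/-- Every phase of the truncated filtration exceeds the last phase. -/
lemma last_lt {n : ℕ} {Mf : Fin (n + 2) → D} {A : Fin (n + 1) → D} {φs : Fin (n + 1) → ℝ}
    (H : IsHNFiltration σ (n + 1) Mf A φs) (i : Fin n) :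
    φs (Fin.last n) < φs i.castSucc :=
  H.2.1 _ _ (Fin.castSucc_lt_last i)

/-- The projection of `M` to its last HN factor is nonzero, so `M` has a nonzero morphism to a
semistable object whose phase is the last one; every other HN filtration of `M` must therefore
have a phase at most that one. -/
lemma exists_phase_le {n m : ℕ} {Mf : Fin (n + 1) → D} {A : Fin n → D} {φs : Fin n → ℝ}
    (H : IsHNFiltration σ n Mf A φs) {Mg : Fin (m + 2) → D} {B : Fin (m + 1) → D}
    {ψs : Fin (m + 1) → ℝ} (H' : IsHNFiltration σ (m + 1) Mg B ψs)
    (e : Mf (Fin.last n) ≅ Mg (Fin.last (m + 1))) : ∃ i, φs i ≤ ψs (Fin.last m) := by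
  by_contra! hlt
  obtain ⟨hB, hP, f, g, h, hT⟩ := H'.2.2 (Fin.last m)
  refine hB (isZero_of_triangle hT ?_ (H'.truncate.hom_shift_eq_zero H'.last_lt hP))
  rw [← cancel_epi e.hom, comp_zero]
  exact H.hom_eq_zero hlt hP _

lemma last_phase_le {n m : ℕ} {Mf : Fin (n + 2) → D} {A : Fin (n + 1) → D}
    {φs : Fin (n + 1) → ℝ} (H : IsHNFiltration σ (n + 1) Mf A φs) {Mg : Fin (m + 2) → D}
    {B : Fin (m + 1) → D} {ψs : Fin (m + 1) → ℝ} (H' : IsHNFiltration σ (m + 1) Mg B ψs)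
    (e : Mf (Fin.last (n + 1)) ≅ Mg (Fin.last (m + 1))) :
    φs (Fin.last n) ≤ ψs (Fin.last m) := by
  obtain ⟨i, hi⟩ := H.exists_phase_le H' e
  rcases (Fin.le_last i).lt_or_eq with h | h
  · exact (H.2.1 _ _ h).le.trans hi
  · exact h ▸ hi

/-- Uniqueness of HN filtrations, for filtrations of isomorphic top objects: this form, with
zero objects allowed, is the one that passes to the truncated filtrations. -/
theorem unique {n : ℕ} : ∀ {m : ℕ} {Mf : Fin (n + 1) → D} {A : Fin n → D} {φs : Fin n → ℝ}
    (_ : IsHNFiltration σ n Mf A φs) {Mg : Fin (m + 1) → D} {B : Fin m → D} {ψs : Fin m → ℝ}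
    (_ : IsHNFiltration σ m Mg B ψs) (_ : Mf (Fin.last n) ≅ Mg (Fin.last m)),
    ∃ e : n = m, ∀ i : Fin n,
      φs i = ψs (Fin.cast e i) ∧ Nonempty (A i ≅ B (Fin.cast e i)) := by
  induction n with
  | zero =>
    intro m Mf A φs H Mg B ψs H' e
    cases m with
    | zero => exact ⟨rfl, fun i => i.elim0⟩
    | succ m => exact (H.exists_phase_le H' e).choose.elim0
  | succ n ih =>
    intro m Mf A φs H Mg B ψs H' e
    cases m with
    | zero => exact (H'.exists_phase_le H e.symm).choose.elim0
    | succ m =>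
      have hphase : φs (Fin.last n) = ψs (Fin.last m) :=
        le_antisymm (H.last_phase_le H' e) (H'.last_phase_le H e.symm)
      obtain ⟨-, hP, f, g, h, hT⟩ := H.2.2 (Fin.last n)
      obtain ⟨-, hP', f', g', h', hT'⟩ := H'.2.2 (Fin.last m)
      have hQ' : σ.P (φs (Fin.last n)) (B (Fin.last m)) := hphase ▸ hP'
      have hQ : σ.P (ψs (Fin.last m)) (A (Fin.last n)) := hphase ▸ hP
      obtain ⟨⟨eN⟩, ⟨eA⟩⟩ := iso_of_triangles hT hT' e
        (H.truncate.hom_eq_zero H.last_lt hP) (H.truncate.hom_shift_eq_zero H.last_lt hP)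
        (H.truncate.hom_eq_zero H.last_lt hQ') (H.truncate.hom_shift_eq_zero H.last_lt hQ')
        (H'.truncate.hom_eq_zero H'.last_lt hQ) (H'.truncate.hom_shift_eq_zero H'.last_lt hQ)
        (H'.truncate.hom_eq_zero H'.last_lt hP') (H'.truncate.hom_shift_eq_zero H'.last_lt hP')
      obtain ⟨rfl, hrec⟩ := ih H.truncate H'.truncate eN
      refine ⟨rfl, fun i => ?_⟩
      induction i using Fin.lastCases with
      | last => exact ⟨hphase, ⟨eA⟩⟩
      | cast i => exact hrec i

end IsHNFiltration

end

/-- Harder–Narasimhan filtrations in a triangulated category are unique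
up to isomorphism: two HN filtrations of the same nonzero object have the same length,
the same phases, and isomorphic factors. -/
theorem HN_filtration_unique_triangulated {D : Type*} [Category D] [HasZeroObject D]
    [Preadditive D] [HasShift D ℤ] [∀ n : ℤ, (shiftFunctor D n).Additive]
    [Pretriangulated D] [HasBinaryBiproducts D]
    (σ : StabilityConditionOn D) (M : D) (hM : ¬ IsZero M)
    -- the first HN filtration
    (n : ℕ) (hn : 0 < n) (Mf : Fin (n + 1) → D) (A : Fin n → D) (φs : Fin n → ℝ)
    (hM0 : IsZero (Mf 0)) (hMn : Mf (Fin.last n) = M)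
    (hφs : ∀ i j : Fin n, i < j → φs j < φs i)
    (hA : ∀ i : Fin n, ¬ IsZero (A i) ∧ σ.P (φs i) (A i) ∧
      ∃ (f : Mf i.castSucc ⟶ Mf i.succ) (g : Mf i.succ ⟶ A i)
        (h : A i ⟶ (Mf i.castSucc)⟦(1 : ℤ)⟧),
        Triangle.mk f g h ∈ (distTriang D))
    -- the second HN filtration
    (m : ℕ) (hm : 0 < m) (Mg : Fin (m + 1) → D) (B : Fin m → D) (ψs : Fin m → ℝ)
    (hM0' : IsZero (Mg 0)) (hMm : Mg (Fin.last m) = M)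
    (hψs : ∀ i j : Fin m, i < j → ψs j < ψs i)
    (hB : ∀ j : Fin m, ¬ IsZero (B j) ∧ σ.P (ψs j) (B j) ∧
      ∃ (f : Mg j.castSucc ⟶ Mg j.succ) (g : Mg j.succ ⟶ B j)
        (h : B j ⟶ (Mg j.castSucc)⟦(1 : ℤ)⟧),
        Triangle.mk f g h ∈ (distTriang D)) :
    ∃ e : n = m, ∀ i : Fin n,
      φs i = ψs (Fin.cast e i) ∧ Nonempty (A i ≅ B (Fin.cast e i)) := by
  subst hMn
  exact IsHNFiltration.unique ⟨hM0, hφs, hA⟩ ⟨hM0', hψs, hB⟩ (eqToIso hMm.symm)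
end

section
/- Let σ = (Z, 𝒫) be a stability condition on 𝒟 and let X be a nonzero object with HN filtration given by distinguished triangles Xᵢ₋₁ → Xᵢ → Aᵢ → Xᵢ₋₁[1] for 1 ≤ i ≤ n, where X₀ = 0, Xₙ = X, each Aᵢ is nonzero with Aᵢ ∈ 𝒫(φᵢ), and φ₁ > φ₂ > ⋯ > φₙ. Then ∏_{i=1}^{n} F^{Xᵢ}_{Xᵢ₋₁, Aᵢ} = 1 in ℚ. -/
/-!
Every factor of the product is already equal to `1`. Write `M ⟶ L ⟶ A ⟶ M⟦1⟧` for one of the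
triangles of the filtration. All HN phases of `M` exceed the phase of `A`, so
`Hom(M, A⟦-j⟧) = 0` for all `j ≥ 0` (`hom_eq_zero_of_phase_lt`). By the long exact sequence,
precomposition with `g : L ⟶ A` is then a bijection `Hom(A, A⟦-j⟧) ≃ Hom(L, A⟦-j⟧)` for every
`j ≥ 0` (`precomp_bijective`). For `j > 0` this gives `{L, A} = {A, A}`. For `j = 0` it says that
every `f : L ⟶ A` is `g ≫ a` for a unique endomorphism `a`; such an `f` has cone `M⟦1⟧` if and
only if `a` is invertible, because an `f` with that cone has the same universal property as `g`.
Hence `|(L, A)_{M⟦1⟧}| = |Aut A|`, and the Hall number is `1`.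
-/

open CategoryTheory CategoryTheory.Limits CategoryTheory.Pretriangulated

variable {D : Type*} [Category D] [HasZeroObject D] [Preadditive D] [HasShift D ℤ]
  [∀ n : ℤ, (shiftFunctor D n).Additive] [Pretriangulated D] [HasBinaryBiproducts D]

/-- `{L, N} = ∏_{i > 0} |Hom(L[i], N)|^((-1)^i)`, as a `finprod` over `i = 1, 2, …`
(all but finitely many factors equal `1` when `D` is left homologically finite). -/
noncomputable def hallBraces (L N : D) : ℚ :=
  ∏ᶠ i : ℕ, (Nat.card (L⟦(i + 1 : ℤ)⟧ ⟶ N) : ℚ) ^ ((-1 : ℤ) ^ (i + 1))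

/-- `|(L, N)_M|`: the number of morphisms `f : L ⟶ N` fitting in a distinguished
triangle `L ⟶ N ⟶ C ⟶ L[1]` with cone `C ≅ M`. -/
noncomputable def hallConeCard (L N M : D) : ℕ :=
  Nat.card {f : L ⟶ N // ∃ (C : D) (g : N ⟶ C) (h : C ⟶ L⟦(1 : ℤ)⟧),
    Triangle.mk f g h ∈ (distTriang D) ∧ Nonempty (C ≅ M)}

/-- The derived Hall number
`F^L_{M,N} = (|(L, N)_{M[1]}| / |Aut N|) · ({L, N} / {N, N})`. -/
noncomputable def hallNumber (L M N : D) : ℚ :=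
  ((hallConeCard L N (M⟦(1 : ℤ)⟧) : ℚ) / (Nat.card (Aut N) : ℚ)) *
    (hallBraces L N / hallBraces N N)

theorem StabilityConditionOn.P_shift_neg (σ : StabilityConditionOn D) {φ : ℝ} {A : D}
    (hA : σ.P φ A) (j : ℕ) : σ.P (φ - j) (A⟦(-(j : ℤ))⟧) := by
  induction j with
  | zero =>
    simpa using σ.P_iso ((shiftFunctorZero' D (-((0 : ℕ) : ℤ)) (by simp)).symm.app A) hA
  | succ j ih =>
    rw [σ.shift]
    have e : A⟦(-(j : ℤ))⟧ ≅ (A⟦(-((j + 1 : ℕ) : ℤ))⟧)⟦(1 : ℤ)⟧ :=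
      (shiftFunctorAdd' D (-((j + 1 : ℕ) : ℤ)) 1 (-(j : ℤ)) (by push_cast; ring)).app A
    have := σ.P_iso e ih
    convert this using 1
    push_cast
    ring

/-- The term `Xf k` of a filtration with semistable quotients `A l ∈ P (φs l)` has no nonzero
morphism to a semistable object whose phase is below that of all quotients of `Xf k`. -/
theorem hom_eq_zero_of_phase_lt (σ : StabilityConditionOn D)
    {n : ℕ} (Xf : Fin (n + 1) → D) (A : Fin n → D) (φs : Fin n → ℝ)
    (hX0 : IsZero (Xf 0))
    (hA : ∀ i : Fin n, σ.P (φs i) (A i) ∧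
      ∃ (f : Xf i.castSucc ⟶ Xf i.succ) (g : Xf i.succ ⟶ A i)
        (h : A i ⟶ (Xf i.castSucc)⟦(1 : ℤ)⟧),
        Triangle.mk f g h ∈ (distTriang D))
    {ψ : ℝ} {B : D} (hB : σ.P ψ B) (k : Fin (n + 1))
    (hk : ∀ l : Fin n, l.castSucc < k → ψ < φs l) (u : Xf k ⟶ B) : u = 0 := by
  induction k using Fin.induction with
  | zero => exact hX0.eq_of_src _ _
  | succ i ih =>
    obtain ⟨hP, f, g, h, hT⟩ := hA i
    have h0 : f ≫ u = 0 :=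
      ih (fun l hl => hk l (hl.trans i.castSucc_lt_succ)) (f ≫ u)
    obtain ⟨v, hv⟩ := Triangle.yoneda_exact₂ _ hT u h0
    have hv0 : v = 0 := σ.hom_zero hP hB (hk i i.castSucc_lt_succ) v
    rw [hv, hv0]
    exact comp_zero

/-- The part of the long exact sequence of `Hom(-, B)` used here: if `Hom(T.obj₁, B)` and
`Hom(T.obj₁⟦1⟧, B)` vanish, then `Hom(T.obj₃, B) ≃ Hom(T.obj₂, B)`. -/
theorem precomp_bijective (T : Triangle D) (hT : T ∈ (distTriang D)) {B : D}
    (h0 : ∀ u : T.obj₁ ⟶ B, u = 0) (h1 : ∀ u : T.obj₁⟦(1 : ℤ)⟧ ⟶ B, u = 0) :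
    Function.Bijective (fun a : T.obj₃ ⟶ B => T.mor₂ ≫ a) := by
  constructor
  · intro a b hab
    have hab' : T.mor₂ ≫ (a - b) = 0 := by
      rw [Preadditive.comp_sub]; exact sub_eq_zero.2 hab
    obtain ⟨v, hv⟩ := Triangle.yoneda_exact₃ T hT _ hab'
    rw [h1 v, comp_zero] at hv
    exact sub_eq_zero.1 hv
  · intro u
    obtain ⟨v, hv⟩ := Triangle.yoneda_exact₂ T hT u (h0 _)
    exact ⟨v, hv.symm⟩

/-- The adjunction `Hom(L⟦j⟧, N) ≃ Hom(L, N⟦-j⟧)`. -/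
noncomputable def shiftHomEquiv (L N : D) (j : ℤ) : (L⟦j⟧ ⟶ N) ≃ (L ⟶ N⟦(-j)⟧) :=
  (shiftEquiv D j).toAdjunction.homEquiv L N

theorem hallBraces_ne_zero (hfin : ∀ X Y : D, Finite (X ⟶ Y)) (L N : D) :
    hallBraces L N ≠ 0 := by
  unfold hallBraces
  refine finprod_induction (fun q : ℚ => q ≠ 0) one_ne_zero (fun _ _ => mul_ne_zero) ?_
  intro i
  have := hfin (L⟦(i + 1 : ℤ)⟧) N
  exact zpow_ne_zero _ (Nat.cast_ne_zero.2 Nat.card_pos.ne')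

/-- If `Hom(M, A)` and `Hom(M⟦1⟧, A)` vanish, then the morphisms `L ⟶ A` with cone `M⟦1⟧` are
exactly the `g ≫ a` with `a` an automorphism of `A`. -/
theorem hallConeCard_eq {L M A : D} (f : M ⟶ L) (g : L ⟶ A) (h : A ⟶ M⟦(1 : ℤ)⟧)
    (hT : Triangle.mk f g h ∈ (distTriang D))
    (h0 : ∀ u : M ⟶ A, u = 0) (h1 : ∀ u : M⟦(1 : ℤ)⟧ ⟶ A, u = 0) :
    hallConeCard L A (M⟦(1 : ℤ)⟧) = Nat.card (Aut A) := by
  have hg : Function.Bijective (fun a : A ⟶ A => g ≫ a) :=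
    precomp_bijective (Triangle.mk f g h) hT h0 h1
  have hcone : ∀ a : Aut A, ∃ (C : D) (p : A ⟶ C) (q : C ⟶ L⟦(1 : ℤ)⟧),
      Triangle.mk (g ≫ a.hom) p q ∈ (distTriang D) ∧ Nonempty (C ≅ M⟦(1 : ℤ)⟧) := by
    intro a
    refine ⟨M⟦(1 : ℤ)⟧, a.inv ≫ h, -f⟦(1 : ℤ)⟧', ?_, ⟨Iso.refl _⟩⟩
    refine isomorphic_distinguished _ (rot_of_distTriang _ hT) _ ?_
    refine Triangle.isoMk _ _ (Iso.refl L) (Iso.symm a) (Iso.refl (M⟦(1 : ℤ)⟧)) ?_ ?_ ?_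
    · change (g ≫ a.hom) ≫ a.inv = 𝟙 L ≫ g
      rw [Category.assoc, a.hom_inv_id, Category.comp_id, Category.id_comp]
    · change (a.inv ≫ h) ≫ 𝟙 (M⟦(1 : ℤ)⟧) = a.inv ≫ h
      rw [Category.comp_id]
    · change (-f⟦(1 : ℤ)⟧') ≫ (𝟙 L)⟦(1 : ℤ)⟧' = 𝟙 (M⟦(1 : ℤ)⟧) ≫ (-f⟦(1 : ℤ)⟧')
      rw [CategoryTheory.Functor.map_id, Category.comp_id, Category.id_comp]
  unfold hallConeCard
  symm
  refine Nat.card_congr (Equiv.ofBijective (fun a : Aut A => ⟨g ≫ a.hom, hcone a⟩) ⟨?_, ?_⟩)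
  · intro a b hab
    exact Iso.ext (hg.1 (congrArg Subtype.val hab))
  · rintro ⟨u, C, p, q, hC, ⟨e⟩⟩
    -- `u` occurs as the second morphism of the inverse rotation `C⟦-1⟧ ⟶ L ⟶ A ⟶ C⟦-1⟧⟦1⟧`,
    -- whose first vertex is isomorphic to `M`.
    have e1 : M ≅ C⟦(-1 : ℤ)⟧ :=
      ((shiftEquiv D (1 : ℤ)).unitIso.app M) ≪≫ (shiftFunctor D (-1 : ℤ)).mapIso e.symm
    have hu : Function.Bijective (fun a : A ⟶ A => u ≫ a) := by
      refine precomp_bijective (Triangle.mk u p q).invRotate (inv_rot_of_distTriang _ hC) ?_ ?_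
      · intro v
        have := h0 (e1.hom ≫ v)
        exact (cancel_epi e1.hom).1 (this.trans comp_zero.symm)
      · intro v
        have := h1 (((shiftFunctor D (1 : ℤ)).mapIso e1).hom ≫ v)
        exact (cancel_epi ((shiftFunctor D (1 : ℤ)).mapIso e1).hom).1
          (this.trans comp_zero.symm)
    obtain ⟨a, ha⟩ := hg.2 u
    obtain ⟨b, hb⟩ := hu.2 g
    simp only at ha hb
    refine ⟨⟨a, b, hg.1 ?_, hu.1 ?_⟩, Subtype.ext ha⟩
    · simp only [← Category.assoc, ha, hb, Category.comp_id]
    · simp only [← Category.assoc, hb, ha, Category.comp_id]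

theorem hallNumber_eq_one (hfin : ∀ X Y : D, Finite (X ⟶ Y))
    {L M A : D} (f : M ⟶ L) (g : L ⟶ A) (h : A ⟶ M⟦(1 : ℤ)⟧)
    (hT : Triangle.mk f g h ∈ (distTriang D))
    (hM : ∀ (j : ℕ) (u : M ⟶ A⟦(-(j : ℤ))⟧), u = 0) :
    hallNumber L M A = 1 := by
  have h0 : ∀ u : M ⟶ A, u = 0 := by
    intro u
    let e : A ≅ A⟦(-((0 : ℕ) : ℤ))⟧ :=
      (shiftFunctorZero' D (-((0 : ℕ) : ℤ)) (by simp)).symm.app A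
    exact (cancel_mono e.hom).1 ((hM 0 (u ≫ e.hom)).trans zero_comp.symm)
  -- Moving one shift across turns `Hom(M⟦1⟧, A⟦-j⟧)` into `Hom(M, A⟦-(j+1)⟧)`.
  have h1 : ∀ (j : ℕ) (u : M⟦(1 : ℤ)⟧ ⟶ A⟦(-(j : ℤ))⟧), u = 0 := by
    intro j u
    let e : A⟦(-((j + 1 : ℕ) : ℤ))⟧ ≅ (A⟦(-(j : ℤ))⟧)⟦(-1 : ℤ)⟧ :=
      (shiftFunctorAdd' D (-(j : ℤ)) (-1) (-((j + 1 : ℕ) : ℤ)) (by push_cast; ring)).app A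
    have hz : ∀ w : M ⟶ (A⟦(-(j : ℤ))⟧)⟦(-1 : ℤ)⟧, w = 0 := fun w =>
      (cancel_mono e.inv).1 ((hM (j + 1) (w ≫ e.inv)).trans zero_comp.symm)
    exact (shiftHomEquiv M _ 1).injective ((hz _).trans (hz _).symm)
  have h10 : ∀ u : M⟦(1 : ℤ)⟧ ⟶ A, u = 0 := by
    intro u
    let e : A ≅ A⟦(-((0 : ℕ) : ℤ))⟧ :=
      (shiftFunctorZero' D (-((0 : ℕ) : ℤ)) (by simp)).symm.app A
    exact (cancel_mono e.hom).1 ((h1 0 (u ≫ e.hom)).trans zero_comp.symm)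
  have hbr : hallBraces L A = hallBraces A A := by
    unfold hallBraces
    refine finprod_congr fun i => ?_
    have hb := precomp_bijective (Triangle.mk f g h) hT (B := A⟦(-((i + 1 : ℕ) : ℤ))⟧)
      (hM (i + 1)) (h1 (i + 1))
    have hc : Nat.card (L⟦(i + 1 : ℤ)⟧ ⟶ A) = Nat.card (A⟦(i + 1 : ℤ)⟧ ⟶ A) :=
      Nat.card_congr ((shiftHomEquiv L A ((i + 1 : ℕ) : ℤ)).trans
        ((Equiv.ofBijective _ hb).symm.trans (shiftHomEquiv A A ((i + 1 : ℕ) : ℤ)).symm))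
    rw [hc]
  have hAut : (Nat.card (Aut A) : ℚ) ≠ 0 := by
    have := hfin A A
    have : Finite (Aut A) :=
      Finite.of_injective (fun a : Aut A => a.hom) fun _ _ hab => Iso.ext hab
    exact Nat.cast_ne_zero.2 Nat.card_pos.ne'
  rw [hallNumber, hallConeCard_eq f g h hT h0 h10, hbr, div_self hAut,
    div_self (hallBraces_ne_zero hfin A A), mul_one]

/-- the product of the derived Hall numbers along a Harder–Narasimhan
filtration equals `1`. -/
theorem prod_hallNumber_HN_eq_one
    -- every Hom-set of `D` is finite
    (hfin : ∀ X Y : D, Finite (X ⟶ Y))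
    -- `D` is left homologically finite
    (hlhf : ∀ X Y : D, {i : ℕ | ¬ Subsingleton (X⟦(i + 1 : ℤ)⟧ ⟶ Y)}.Finite)
    (σ : StabilityConditionOn D) (X : D) (hX : ¬ IsZero X)
    -- an HN filtration of `X`
    (n : ℕ) (hn : 0 < n) (Xf : Fin (n + 1) → D) (A : Fin n → D) (φs : Fin n → ℝ)
    (hX0 : IsZero (Xf 0)) (hXn : Xf (Fin.last n) = X)
    (hφs : ∀ i j : Fin n, i < j → φs j < φs i)
    (hA : ∀ i : Fin n, ¬ IsZero (A i) ∧ σ.P (φs i) (A i) ∧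
      ∃ (f : Xf i.castSucc ⟶ Xf i.succ) (g : Xf i.succ ⟶ A i)
        (h : A i ⟶ (Xf i.castSucc)⟦(1 : ℤ)⟧),
        Triangle.mk f g h ∈ (distTriang D)) :
    ∏ i : Fin n, hallNumber (Xf i.succ) (Xf i.castSucc) (A i) = 1 := by
  refine Finset.prod_eq_one fun i _ => ?_
  obtain ⟨-, hP, f, g, h, hT⟩ := hA i
  refine hallNumber_eq_one hfin f g h hT fun j u => ?_
  refine hom_eq_zero_of_phase_lt σ Xf A φs hX0 (fun i => (hA i).2) (σ.P_shift_neg hP j) _ ?_ u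
  intro l hl
  have := hφs l i (Fin.castSucc_lt_castSucc_iff.1 hl)
  have hj : (0 : ℝ) ≤ j := Nat.cast_nonneg j
  linarith
end
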